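/- Let A be an abelian group of finite Prüfer rank and A = A_1 ⊇ A_2 ⊇ ⋯ a descending sequence of subgroups. Set = lim A/A_i. Then Â/pÂ and the p-torsion subgroup of are finite, with dim_{ℤ/p}(Â/pÂ) ≤ D_p(A) and dim_{ℤ/p}({a ∈ | pa = 0}) ≤ D_p(A). -/

import Mathlib

open TensorProduct

/-- The subgroup `pA = {x | ∃ a, p • a = x}` of an abelian group `A`. -/
def pMul (p : ℕ) (A : Type) [AddCommGroup A] : AddSubgroup A where
  carrier := {x | ∃ a : A, p • a = x}
  zero_mem' := ⟨0, smul_zero p⟩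
  add_mem' := by rintro _ _ ⟨a, rfl⟩ ⟨b, rfl⟩; exact ⟨a + b, smul_add p a b⟩
  neg_mem' := by rintro _ ⟨a, rfl⟩; exact ⟨-a, smul_neg p a⟩

/-- The `p`-torsion subgroup `{a ∈ A | p • a = 0}`. -/
def pTor (p : ℕ) (A : Type) [AddCommGroup A] : AddSubgroup A where
  carrier := {x | p • x = 0}
  zero_mem' := smul_zero p
  add_mem' := by
    intro a b ha hb; show p • (a + b) = 0
    rw [smul_add, ha, hb, add_zero]
  neg_mem' := by
    intro a ha; show p • (-a) = 0
    rw [smul_neg, ha, neg_zero]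

/-- The `ZMod p`-vector space structure on the `p`-torsion subgroup. -/
noncomputable instance pTorModule (p : ℕ) (A : Type) [AddCommGroup A] :
    Module (ZMod p) (pTor p A) :=
  AddCommGroup.zmodModule (fun x => Subtype.ext x.2)

/-- The `ZMod p`-vector space structure on `A/pA`. -/
noncomputable instance quotPModule (p : ℕ) (A : Type) [AddCommGroup A] :
    Module (ZMod p) (A ⧸ pMul p A) :=
  AddCommGroup.zmodModule (by
    intro x
    induction x using QuotientAddGroup.induction_on with
    | _ a =>
      rw [show (p • ((a : A) : A ⧸ pMul p A)) = (((p • a : A) : A) : A ⧸ pMul p A) from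
        (map_nsmul (QuotientAddGroup.mk' (pMul p A)) p a).symm]
      exact (QuotientAddGroup.eq_zero_iff _).2 ⟨a, rfl⟩)

/-- An abelian group has finite Prüfer rank if there is `r` such that every finitely
generated subgroup can be generated by `r` elements. -/
def HasFinitePruferRank (A : Type) [AddCommGroup A] : Prop :=
  ∃ r : ℕ, ∀ S : AddSubgroup A, S.FG →
    ∃ s : Finset A, s.card ≤ r ∧ AddSubgroup.closure (s : Set A) = S

/-- `D_p(A) = dim_ℚ (A ⊗ ℚ) + dim_{ℤ/p} {a ∈ A | pa = 0}`. -/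
noncomputable def Dp (p : ℕ) (A : Type) [AddCommGroup A] : ℕ :=
  Module.finrank ℚ (ℚ ⊗[ℤ] A) + Module.finrank (ZMod p) (pTor p A)

/-- The completion `Â = lim A/A_i` of `A` with respect to a descending filtration,
realized as the subgroup of compatible sequences in `Π i, A/A_i`. -/
def filtCompletion (A : Type) [AddCommGroup A] (S : ℕ → AddSubgroup A) (hS : Antitone S) :
    AddSubgroup (∀ i : ℕ, A ⧸ S i) where
  carrier := {x | ∀ i j : ℕ, ∀ h : i ≤ j,
    QuotientAddGroup.map (S j) (S i) (AddMonoidHom.id A) (by simpa using hS h) (x j) = x i}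
  zero_mem' := by intro i j h; simp
  add_mem' := by intro a b ha hb i j h; simp [map_add, ha i j h, hb i j h]
  neg_mem' := by intro a ha i j h; simp [map_neg, ha i j h]

/-!
`D_p(A)` bounds the dimension of every `ℤ/p`-subquotient `V` of `A`. Lift `k` independent vectors
of `V` to `A`: the relations among the lifts form a subgroup of `p ℤ^k`, so dividing a basis of
relations by `p` gives as many independent elements of `A[p]`, while the lifts generate a group of
rank at most `dim (A ⊗ ℚ)`. In particular `(A/A_i)/p` and `(A/A_i)[p]` have dimension at most
`D_p(A)` for every `i`.

These bounds pass to the limit because `Â/p` and `Â[p]` embed in the inverse limits of the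
`(A/A_i)/p` and the `(A/A_i)[p]`. For `Â/p` this is a compactness argument: the solutions `y` of
`p y = x_i` in `A/A_i` form a coset of the finite group `(A/A_i)[p]`, so they can be chosen
compatibly.
-/

section LinearAlgebra

theorem exists_forall_le_of_directed_ge {α ι : Type*} [PartialOrder α] [WellFoundedLT α]
    [Nonempty ι] {f : ι → α} (hf : Directed (· ≥ ·) f) : ∃ i, ∀ j, f i ≤ f j := by
  obtain ⟨_, ⟨i, rfl⟩, hi⟩ := wellFounded_lt.has_min (Set.range f) (Set.range_nonempty f)
  refine ⟨i, fun j ↦ ?_⟩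
  obtain ⟨k, hki, hkj⟩ := hf i j
  exact (hki.eq_of_not_lt (hi _ ⟨k, rfl⟩)).symm.trans_le hkj

theorem exists_disjoint_of_directed_of_iInf_eq_bot {R M ι : Type*} [Ring R] [AddCommGroup M]
    [Module R M] [Nonempty ι] {N : ι → Submodule R M} (hdir : Directed (· ≥ ·) N)
    (hN : ⨅ i, N i = ⊥) (U : Submodule R M) [IsArtinian R U] : ∃ i, Disjoint U (N i) := by
  obtain ⟨i, hi⟩ := exists_forall_le_of_directed_ge
    (hdir.mono_comp (g := Submodule.comap U.subtype) _ fun _ _ h ↦ Submodule.comap_mono h)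
  refine ⟨i, Submodule.disjoint_def.2 fun x hxU hxi ↦ ?_⟩
  have hx : x ∈ ⨅ j, N j := (Submodule.mem_iInf _).2 fun j ↦ @hi j ⟨x, hxU⟩ hxi
  rwa [hN, Submodule.mem_bot] at hx

theorem rank_le_of_directed_ker {K V ι : Type*} {W : ι → Type*} [DivisionRing K]
    [AddCommGroup V] [Module K V] [∀ i, AddCommGroup (W i)] [∀ i, Module K (W i)] [Nonempty ι]
    {f : ∀ i, V →ₗ[K] W i} (hdir : Directed (· ≥ ·) fun i ↦ LinearMap.ker (f i))
    (hker : ⨅ i, LinearMap.ker (f i) = ⊥) {n : ℕ} (hn : ∀ i, Module.rank K (W i) ≤ n) :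
    Module.rank K V ≤ n := by
  refine rank_le fun s hs ↦ ?_
  have : FiniteDimensional K (Submodule.span K (Set.range ((↑) : s → V))) :=
    FiniteDimensional.span_of_finite K (Set.finite_range _)
  obtain ⟨i, hi⟩ := exists_disjoint_of_directed_of_iInf_eq_bot hdir hker
    (Submodule.span K (Set.range ((↑) : s → V)))
  have hcard := (hs.map hi).cardinal_lift_le_rank.trans (Cardinal.lift_le.2 (hn i))
  simpa using hcard

theorem span_eq_span_of_addSubgroup_closure_eq (R : Type*) {M : Type*} [Ring R]
    [AddCommGroup M] [Module R M] {s t : Set M}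
    (h : AddSubgroup.closure s = AddSubgroup.closure t) :
    Submodule.span R s = Submodule.span R t := by
  have hint : Submodule.span ℤ s = Submodule.span ℤ t :=
    Submodule.toAddSubgroup_injective (by simpa only [Submodule.span_int_eq_addSubgroupClosure])
  rw [← Submodule.span_span_of_tower ℤ R s, hint, Submodule.span_span_of_tower]

theorem linearIndependent_zmod_iff_forall_dvd {p : ℕ} {ι V : Type*} [Fintype ι] [AddCommGroup V]
    [Module (ZMod p) V] {v : ι → V} :
    LinearIndependent (ZMod p) v ↔
      ∀ c : ι → ℤ, ∑ i, c i • v i = 0 → ∀ i, (p : ℤ) ∣ c i := by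
  simp only [Fintype.linearIndependent_iff, ← ZMod.intCast_zmod_eq_zero_iff_dvd]
  rw [(ZMod.intCast_surjective.comp_left (α := ι)).forall]
  simp only [Function.comp_apply, Int.cast_smul_eq_zsmul]

theorem finite_and_finrank_le_of_rank_le {K V : Type*} [DivisionRing K] [Finite K]
    [AddCommGroup V] [Module K V] {n : ℕ} (h : Module.rank K V ≤ n) :
    Finite V ∧ Module.finrank K V ≤ n := by
  have : Module.Finite K V := Module.rank_lt_aleph0_iff.1 (h.trans_lt Cardinal.natCast_lt_aleph0)
  exact ⟨Module.finite_of_finite K, Module.finrank_le_of_rank_le h⟩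

theorem rank_rat_tensorProduct (A : Type*) [AddCommGroup A] :
    Module.rank ℚ (ℚ ⊗[ℤ] A) = Module.rank ℤ A :=
  IsBaseChange.rank_eq (TensorProduct.isBaseChange ℤ A ℚ)

end LinearAlgebra

section PruferRank

variable {A : Type} [AddCommGroup A]

theorem HasFinitePruferRank.addSubgroup (hA : HasFinitePruferRank A) (H : AddSubgroup A) :
    HasFinitePruferRank H := by
  classical
  obtain ⟨r, hr⟩ := hA
  refine ⟨r, ?_⟩
  rintro K ⟨t, ht⟩
  obtain ⟨s, hsr, hs⟩ := hr (K.map H.subtype)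
    ⟨t.image H.subtype, by rw [Finset.coe_image, ← AddMonoidHom.map_closure, ht]⟩
  have hsH : ∀ x ∈ s, x ∈ H := fun x hx ↦
    AddSubgroup.map_subtype_le K (hs ▸ AddSubgroup.subset_closure hx)
  refine ⟨s.subtype (· ∈ H), ?_, ?_⟩
  · rw [Finset.card_subtype]
    exact (s.card_filter_le _).trans hsr
  · apply AddSubgroup.map_injective H.subtype_injective
    have himage : H.subtype '' (s.subtype (· ∈ H) : Set H) = s :=
      (Finset.coe_map _ _).symm.trans (congrArg _ (Finset.subtype_map_of_mem hsH))
    rw [AddMonoidHom.map_closure, himage, hs]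

theorem HasFinitePruferRank.rank_lt_aleph0 (hA : HasFinitePruferRank A) (R : Type*) [Ring R]
    [StrongRankCondition R] [Module R A] : Module.rank R A < Cardinal.aleph0 := by
  obtain ⟨r, hr⟩ := hA
  refine (rank_le fun s hs ↦ ?_).trans_lt (Cardinal.natCast_lt_aleph0 (n := r))
  obtain ⟨t, htr, hts⟩ := hr (AddSubgroup.closure s) ⟨s, rfl⟩
  calc s.card = Module.finrank R (Submodule.span R (s : Set A)) :=
        (finrank_span_finset_eq_card hs).symm
    _ = Module.finrank R (Submodule.span R (t : Set A)) := by
        rw [span_eq_span_of_addSubgroup_closure_eq R hts]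
    _ ≤ t.card := finrank_span_finset_le_card t
    _ ≤ r := htr

theorem HasFinitePruferRank.finite_rat_tensorProduct (hA : HasFinitePruferRank A) :
    Module.Finite ℚ (ℚ ⊗[ℤ] A) :=
  Module.rank_lt_aleph0_iff.1 (rank_rat_tensorProduct A ▸ hA.rank_lt_aleph0 ℤ)

theorem HasFinitePruferRank.finite_pTor (hA : HasFinitePruferRank A) {p : ℕ} (hp : p.Prime) :
    Finite (pTor p A) := by
  have := Fact.mk hp
  have : Module.Finite (ZMod p) (pTor p A) :=
    Module.rank_lt_aleph0_iff.1 ((hA.addSubgroup _).rank_lt_aleph0 (ZMod p))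
  exact Module.finite_of_finite (ZMod p)

end PruferRank

section Subquotients

variable {p : ℕ} [Fact p.Prime] {A : Type} [AddCommGroup A] [Finite (pTor p A)]

theorem finrank_ker_le_finrank_pTor {F : Type*} [AddCommGroup F] [Module.Free ℤ F]
    [Module.Finite ℤ F] (φ : F →ₗ[ℤ] A) (hφ : ∀ x ∈ LinearMap.ker φ, ∃ y, (p : ℤ) • y = x) :
    Module.finrank ℤ (LinearMap.ker φ) ≤ Module.finrank (ZMod p) (pTor p A) := by
  let b := Module.finBasis ℤ (LinearMap.ker φ)
  choose y hy using fun i ↦ hφ (b i) (b i).2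
  have hφy (i) : p • φ (y i) = 0 := by
    rw [← natCast_zsmul, ← map_zsmul, hy]
    exact (b i).2
  let v i : pTor p A := ⟨φ (y i), hφy i⟩
  suffices LinearIndependent (ZMod p) v by simpa using this.fintype_card_le_finrank
  refine linearIndependent_zmod_iff_forall_dvd.2 fun c hc i ↦ ?_
  have hker : ∑ j, c j • y j ∈ LinearMap.ker φ := by
    simpa [v] using congrArg (pTor p A).subtype hc
  have hsum : ∑ j, c j • b j = (p : ℤ) • ⟨∑ j, c j • y j, hker⟩ := by
    apply Subtype.ext
    simp [← hy, Finset.smul_sum, smul_comm (p : ℤ)]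
  calc (p : ℤ) ∣ (p : ℤ) * b.repr ⟨∑ j, c j • y j, hker⟩ i := dvd_mul_right _ _
    _ = b.repr (∑ j, c j • b j) i := by rw [hsum, map_smul, Finsupp.smul_apply, smul_eq_mul]
    _ = c i := congrFun (b.repr_sum_self c) i

variable [Module.Finite ℚ (ℚ ⊗[ℤ] A)]

theorem finrank_range_le_finrank_rat_tensorProduct {F : Type*} [AddCommGroup F] (φ : F →ₗ[ℤ] A) :
    Module.finrank ℤ (LinearMap.range φ) ≤ Module.finrank ℚ (ℚ ⊗[ℤ] A) :=
  Cardinal.toNat_le_toNat ((Submodule.rank_le _).trans_eq (rank_rat_tensorProduct A).symm)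
    (Module.rank_lt_aleph0 ℚ _)

theorem finrank_le_Dp_of_forall_mem_ker {F : Type*} [AddCommGroup F] [Module.Free ℤ F]
    [Module.Finite ℤ F] (φ : F →ₗ[ℤ] A) (hφ : ∀ x ∈ LinearMap.ker φ, ∃ y, (p : ℤ) • y = x) :
    Module.finrank ℤ F ≤ Dp p A :=
  calc Module.finrank ℤ F
      = Module.finrank ℤ (LinearMap.range φ) + Module.finrank ℤ (LinearMap.ker φ) := by
        rw [← φ.quotKerEquivRange.finrank_eq, Submodule.finrank_quotient_add_finrank]
    _ ≤ Dp p A :=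
        add_le_add (finrank_range_le_finrank_rat_tensorProduct φ)
          (finrank_ker_le_finrank_pTor φ hφ)

theorem rank_le_Dp_of_surjective {V : Type*} [AddCommGroup V] [Module (ZMod p) V]
    {H : AddSubgroup A} (π : H →+ V) (hπ : Function.Surjective π) :
    Module.rank (ZMod p) V ≤ Dp p A := by
  refine rank_le fun s hs ↦ ?_
  choose a ha using fun v : s ↦ hπ v
  let φ : (s → ℤ) →ₗ[ℤ] A := Fintype.linearCombination ℤ fun v ↦ (a v : A)
  have hφ : ∀ c ∈ LinearMap.ker φ, ∃ d, (p : ℤ) • d = c := by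
    intro c hc
    have hcH : ∑ v, c v • a v = 0 := by
      apply Subtype.ext
      simpa [φ, Fintype.linearCombination_apply] using hc
    have hcV : ∑ v, c v • (v : V) = 0 := by simpa [ha] using congrArg π hcH
    choose d hd using linearIndependent_zmod_iff_forall_dvd.1 hs c hcV
    exact ⟨d, funext fun v ↦ (hd v).symm⟩
  simpa using finrank_le_Dp_of_forall_mem_ker φ hφ

theorem rank_pTor_quotient_le_Dp (N : AddSubgroup A) :
    Module.rank (ZMod p) (pTor p (A ⧸ N)) ≤ Dp p A :=
  rank_le_Dp_of_surjective ((QuotientAddGroup.mk' N).addSubgroupComap (pTor p (A ⧸ N)))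
    (AddMonoidHom.addSubgroupComap_surjective_of_surjective _ _
      (QuotientAddGroup.mk'_surjective N))

theorem rank_quotient_pMul_quotient_le_Dp (N : AddSubgroup A) :
    Module.rank (ZMod p) ((A ⧸ N) ⧸ pMul p (A ⧸ N)) ≤ Dp p A :=
  rank_le_Dp_of_surjective
    (((QuotientAddGroup.mk' (pMul p (A ⧸ N))).comp (QuotientAddGroup.mk' N)).comp
      (⊤ : AddSubgroup A).subtype)
    (((QuotientAddGroup.mk'_surjective _).comp (QuotientAddGroup.mk'_surjective N)).comp
      fun a ↦ ⟨⟨a, trivial⟩, rfl⟩)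

end Subquotients

section Functoriality

theorem finite_setOf_nsmul_eq (p : ℕ) {A : Type} [AddCommGroup A] [Finite (pTor p A)] (b : A) :
    {y : A | p • y = b}.Finite := by
  rcases Set.eq_empty_or_nonempty {y : A | p • y = b} with hempty | ⟨y₀, hy₀⟩
  · simp [hempty]
  · refine ((pTor p A : Set A).toFinite.image (y₀ + ·)).subset fun y hy ↦ ⟨y - y₀, ?_, by simp⟩
    change p • (y - y₀) = 0
    rw [smul_sub, hy.out, hy₀.out, sub_self]

variable {p : ℕ} {A B : Type} [AddCommGroup A] [AddCommGroup B]

theorem pTor_le_comap (f : A →+ B) : pTor p A ≤ (pTor p B).comap f := fun a (ha : p • a = 0) ↦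
  show p • f a = 0 by rw [← map_nsmul, ha, map_zero]

theorem pMul_le_comap (f : A →+ B) : pMul p A ≤ (pMul p B).comap f := by
  rintro _ ⟨a, rfl⟩
  exact ⟨f a, (map_nsmul f p a).symm⟩

/-- The linear map `A[p] → B[p]` induced by a homomorphism `A → B`. -/
noncomputable def pTorMap (p : ℕ) (f : A →+ B) : pTor p A →ₗ[ZMod p] pTor p B :=
  ((f.comp (pTor p A).subtype).codRestrict (pTor p B) fun a ↦ pTor_le_comap f a.2).toZModLinearMap p

/-- The linear map `A/pA → B/pB` induced by a homomorphism `A → B`. -/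
noncomputable def quotPMap (p : ℕ) (f : A →+ B) : (A ⧸ pMul p A) →ₗ[ZMod p] B ⧸ pMul p B :=
  (QuotientAddGroup.map _ _ f (pMul_le_comap f)).toZModLinearMap p

theorem mem_ker_pTorMap {f : A →+ B} {a : pTor p A} :
    a ∈ LinearMap.ker (pTorMap p f) ↔ f a = 0 :=
  LinearMap.mem_ker.trans Subtype.ext_iff

theorem mk_mem_ker_quotPMap {f : A →+ B} {a : A} :
    (a : A ⧸ pMul p A) ∈ LinearMap.ker (quotPMap p f) ↔ f a ∈ pMul p B :=
  LinearMap.mem_ker.trans (QuotientAddGroup.eq_zero_iff (f a))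

end Functoriality

section Completion

variable {A : Type} [AddCommGroup A] {S : ℕ → AddSubgroup A} (hS : Antitone S)

/-- The transition map `A/A_j → A/A_i`, for `i ≤ j`, of the inverse system defining `Â`. -/
def quotientTransition {i j : ℕ} (h : i ≤ j) : A ⧸ S j →+ A ⧸ S i :=
  QuotientAddGroup.map (S j) (S i) (AddMonoidHom.id A) (hS h)

/-- The projection `Â → A/A_i`. -/
def completionProj (i : ℕ) : filtCompletion A S hS →+ A ⧸ S i :=
  (Pi.evalAddMonoidHom _ i).comp (filtCompletion A S hS).subtype

theorem quotientTransition_completionProj {i j : ℕ} (h : i ≤ j) (x : filtCompletion A S hS) :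
    quotientTransition hS h (completionProj hS j x) = completionProj hS i x :=
  x.2 i j h

theorem exists_completionProj_mem {T : ∀ i, Set (A ⧸ S i)} (hfin : ∀ i, (T i).Finite)
    (hne : ∀ i, (T i).Nonempty)
    (hT : ∀ ⦃i j⦄ (h : i ≤ j), Set.MapsTo (quotientTransition hS h) (T j) (T i)) :
    ∃ x : filtCompletion A S hS, ∀ i, completionProj hS i x ∈ T i := by
  let F : CategoryTheory.Functor ℕᵒᵖ Type :=
    { obj := fun i ↦ T i.unop
      map := fun f ↦ TypeCat.ofHom (hT (CategoryTheory.leOfHom f.unop)).restrict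
      map_id := fun i ↦ by
        ext ⟨y, hy⟩
        induction y using QuotientAddGroup.induction_on
        rfl
      map_comp := fun f g ↦ by
        ext ⟨y, hy⟩
        induction y using QuotientAddGroup.induction_on
        rfl }
  have : ∀ i, Finite (F.obj i) := fun i ↦ hfin i.unop
  have : ∀ i, Nonempty (F.obj i) := fun i ↦ (hne i.unop).to_subtype
  obtain ⟨y, hy⟩ := nonempty_sections_of_finite_inverse_system F
  exact ⟨⟨fun i ↦ (y (.op i)).1, fun i j h ↦ congrArg Subtype.val
    (hy (CategoryTheory.homOfLE h).op)⟩, fun i ↦ (y (.op i)).2⟩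

variable (p : ℕ)

theorem antitone_ker_pTorMap_completionProj :
    Antitone fun i ↦ LinearMap.ker (pTorMap p (completionProj hS i)) := by
  intro i j h x hx
  rw [mem_ker_pTorMap] at hx ⊢
  rw [← quotientTransition_completionProj hS h, hx, map_zero]

theorem antitone_ker_quotPMap_completionProj :
    Antitone fun i ↦ LinearMap.ker (quotPMap p (completionProj hS i)) := by
  intro i j h x hx
  induction x using QuotientAddGroup.induction_on with | _ x
  rw [mk_mem_ker_quotPMap] at hx ⊢
  rw [← quotientTransition_completionProj hS h]
  exact pMul_le_comap _ hx

theorem iInf_ker_pTorMap_completionProj :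
    ⨅ i, LinearMap.ker (pTorMap p (completionProj hS i)) = ⊥ := by
  refine (Submodule.eq_bot_iff _).2 fun x hx ↦ ?_
  simp only [Submodule.mem_iInf, mem_ker_pTorMap] at hx
  exact Subtype.ext (Subtype.ext (funext hx))

variable {p}

theorem mem_pMul_of_forall_completionProj_mem [∀ i, Finite (pTor p (A ⧸ S i))]
    {x : filtCompletion A S hS} (hx : ∀ i, completionProj hS i x ∈ pMul p (A ⧸ S i)) :
    x ∈ pMul p (filtCompletion A S hS) := by
  obtain ⟨y, hy⟩ := exists_completionProj_mem hS
    (T := fun i ↦ {y | p • y = completionProj hS i x})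
    (fun i ↦ finite_setOf_nsmul_eq p _) hx
    (fun i j h y hy ↦ by
      rw [Set.mem_ofPred_eq, ← map_nsmul, hy.out, quotientTransition_completionProj])
  exact ⟨y, Subtype.ext (funext hy)⟩

theorem iInf_ker_quotPMap_completionProj [∀ i, Finite (pTor p (A ⧸ S i))] :
    ⨅ i, LinearMap.ker (quotPMap p (completionProj hS i)) = ⊥ := by
  refine (Submodule.eq_bot_iff _).2 fun x hx ↦ ?_
  induction x using QuotientAddGroup.induction_on with | _ x
  simp only [Submodule.mem_iInf, mk_mem_ker_quotPMap] at hx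
  exact (QuotientAddGroup.eq_zero_iff x).2 (mem_pMul_of_forall_completionProj_mem hS hx)

end Completion

theorem bousfield_stmt9_general (p : ℕ) (hp : p.Prime) (A : Type) [AddCommGroup A]
    (hrank : Module.Finite ℚ (ℚ ⊗[ℤ] A)) (htor : Finite (pTor p A))
    (S : ℕ → AddSubgroup A) (hS : Antitone S) :
    Finite ((filtCompletion A S hS) ⧸ pMul p (filtCompletion A S hS)) ∧
    Module.finrank (ZMod p) ((filtCompletion A S hS) ⧸ pMul p (filtCompletion A S hS))
      ≤ Dp p A ∧
    Finite (pTor p (filtCompletion A S hS)) ∧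
    Module.finrank (ZMod p) (pTor p (filtCompletion A S hS)) ≤ Dp p A := by
  have := Fact.mk hp
  have : ∀ i, Finite (pTor p (A ⧸ S i)) := fun i ↦
    (finite_and_finrank_le_of_rank_le (rank_pTor_quotient_le_Dp (S i))).1
  rw [← and_assoc]
  constructor <;> apply finite_and_finrank_le_of_rank_le
  · exact rank_le_of_directed_ker (antitone_ker_quotPMap_completionProj hS p).directed_ge
      (iInf_ker_quotPMap_completionProj hS) fun i ↦ rank_quotient_pMul_quotient_le_Dp (S i)
  · exact rank_le_of_directed_ker (antitone_ker_pTorMap_completionProj hS p).directed_ge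
      (iInf_ker_pTorMap_completionProj hS p) fun i ↦ rank_pTor_quotient_le_Dp (S i)

/-- let `A` be an abelian group of finite Prüfer rank and
`A = A_0 ⊇ A_1 ⊇ ⋯` a descending sequence of subgroups, `Â = lim A/A_i`.  Then `Â/pÂ`
and the `p`-torsion of `Â` are finite, of `ℤ/p`-dimension at most `D_p(A)`. -/
theorem bousfield_stmt9 (p : ℕ) (hp : p.Prime) (A : Type) [AddCommGroup A]
    (hA : HasFinitePruferRank A) (S : ℕ → AddSubgroup A) (hS : Antitone S) (hS0 : S 0 = ⊤) :
    Finite ((filtCompletion A S hS) ⧸ pMul p (filtCompletion A S hS)) ∧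
    Module.finrank (ZMod p) ((filtCompletion A S hS) ⧸ pMul p (filtCompletion A S hS))
      ≤ Dp p A ∧
    Finite (pTor p (filtCompletion A S hS)) ∧
    Module.finrank (ZMod p) (pTor p (filtCompletion A S hS)) ≤ Dp p A :=
  bousfield_stmt9_general p hp A hA.finite_rat_tensorProduct (hA.finite_pTor hp) S hS
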